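/- Let S = ⟨n₁ < n₂ < ⋯ < n_e⟩ be a MANS-semigroup with n₁ ≥ 3 and e ≥ 2, with minimal generators n₁ < n₂ < ⋯ < n_e. If n_e mod n₁ < n₁ − 1, then n_e + 1 is suitably monotone for S; that is, writing Ap(S, n₁) = {w(0), …, w(n₁−1)}, one has n_e < n_e + 1, n_e mod n₁ < (n_e + 1) mod n₁, and w(((n_e+1) mod n₁) − 1) < n_e + 1 < w((n_e+1) mod n₁). -/

import Mathlib

/-- `S ⊆ ℕ` is a numerical semigroup: contains `0`, closed under addition,
and has finite complement in `ℕ`. -/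
def IsNumSgp (S : Set ℕ) : Prop :=
  0 ∈ S ∧ (∀ a ∈ S, ∀ b ∈ S, a + b ∈ S) ∧ Sᶜ.Finite

/-- `⟨A⟩`: the additive submonoid of `ℕ` generated by `A`, viewed as a set. -/
def gen (A : Set ℕ) : Set ℕ := (AddSubmonoid.closure A : Set ℕ)

/-- The multiplicity `m(S)`: the least nonzero element of `S`. -/
noncomputable def nsMult (S : Set ℕ) : ℕ := sInf {x | x ∈ S ∧ x ≠ 0}

/-- The minimal system of generators of `S`: the nonzero elements of `S` that are
not a sum of two nonzero elements of `S`. -/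
def msg (S : Set ℕ) : Set ℕ :=
  {x | x ∈ S ∧ x ≠ 0 ∧ ∀ a ∈ S, a ≠ 0 → ∀ b ∈ S, b ≠ 0 → x ≠ a + b}

/-- The ratio `r(S)`: the second smallest minimal generator of `S`. -/
noncomputable def nsRatio (S : Set ℕ) : ℕ := sInf (msg S \ {nsMult S})

/-- The maximum minimal generator `M(S)`. -/
noncomputable def nsMaxGen (S : Set ℕ) : ℕ := sSup (msg S)

/-- The Apéry set `Ap(S, n) = {s ∈ S : s - n ∉ S}`. -/
def AperySet (S : Set ℕ) (n : ℕ) : Set ℕ :=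
  {s | s ∈ S ∧ ¬ ∃ y ∈ S, y + n = s}

/-- `w(i)`: the least element of `S` congruent to `i` modulo `n`. -/
noncomputable def aperyW (S : Set ℕ) (n i : ℕ) : ℕ :=
  sInf {s | s ∈ S ∧ s % n = i % n}

/-- A MANS-semigroup: a numerical semigroup whose Apéry set with respect to the
multiplicity is monotone, i.e. `w(1) < w(2) < ⋯ < w(m(S) - 1)`. -/
def IsMANS (S : Set ℕ) : Prop :=
  IsNumSgp S ∧ ∀ i : ℕ, 0 < i → i + 1 < nsMult S →
    aperyW S (nsMult S) i < aperyW S (nsMult S) (i + 1)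

/-- The Frobenius number `F(S)`: the greatest integer not in `S`. -/
noncomputable def nsFrob (S : Set ℕ) : ℕ := sSup {x | x ∉ S}

/-- The genus `g(S)`: the number of gaps of `S`. -/
noncomputable def nsGenus (S : Set ℕ) : ℕ := Set.ncard {x | x ∉ S}

/-- The set of pseudo-Frobenius numbers of `S`: integers `x ∉ S` such that
`x + s ∈ S` for every nonzero `s ∈ S`. -/
def nsPF (S : Set ℕ) : Set ℤ :=
  {x : ℤ | x ∉ ((Nat.cast : ℕ → ℤ) '' S) ∧
    ∀ s ∈ S, s ≠ 0 → x + (s : ℤ) ∈ ((Nat.cast : ℕ → ℤ) '' S)}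

/-- The type `t(S)`: the number of pseudo-Frobenius numbers of `S`. -/
noncomputable def nsType (S : Set ℕ) : ℕ := (nsPF S).ncard

/-- `S` is pseudo-symmetric iff `F(S) = 2 g(S) - 2`. -/
def IsPseudoSymmetric (S : Set ℕ) : Prop :=
  (nsFrob S : ℤ) = 2 * (nsGenus S : ℤ) - 2

/-!
Let `m` be the multiplicity and `x` a minimal generator with `m ∤ x + 1`. If `x + 1 = a + b` with
`a, b ∈ S` nonzero, then one summand, say `a`, is not divisible by `m`. Monotonicity of the Apéry
set provides `c ∈ S` with `c < a` and `c ≡ a - 1` modulo `m`, so `c + b ≡ x` and `c + b ≤ x`. Since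
no nonzero element of `S` below `x` is congruent to `x`, we get `x = c + b`. As `x` is a minimal
generator, `c = 0`, so `a ≡ 1` and `a = 1`, which forces `m = 1` and contradicts `m ∤ a`. Hence
`x + 1` is a minimal generator as soon as it lies in `S`, so `x + 1 ∉ S` when `x` is the largest
minimal generator. If moreover `x ≠ m`, then `w(x + 1) > w(x) = x`, and `w(x + 1) ∈ S` improves this
to `w(x + 1) > x + 1`.
-/

theorem succ_mod_of_not_dvd {m i : ℕ} (h : ¬ m ∣ i + 1) : (i + 1) % m = i % m + 1 := by
  have hsucc := Nat.div_add_mod (i + 1) m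
  rw [Nat.succ_div_of_not_dvd h] at hsucc
  have hi := Nat.div_add_mod i m
  omega

section AperyW

variable {S : Set ℕ} {n i s : ℕ}

theorem aperyW_le (hs : s ∈ S) (h : s ≡ i [MOD n]) : aperyW S n i ≤ s :=
  Nat.sInf_le ⟨hs, h⟩

theorem aperyW_mod (S : Set ℕ) (n i : ℕ) : aperyW S n (i % n) = aperyW S n i := by
  simp only [aperyW, Nat.mod_mod]

theorem aperyW_zero (h0 : 0 ∈ S) (n : ℕ) : aperyW S n 0 = 0 :=
  Nat.le_zero.1 (aperyW_le h0 rfl)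

theorem exists_mem_modEq_of_finite_compl (hS : Sᶜ.Finite) (hn : n ≠ 0) (i : ℕ) :
    ∃ s ∈ S, s ≡ i [MOD n] := by
  have hev : ∀ᶠ s in Filter.atTop, s ∈ S := by
    rw [← Nat.cofinite_eq_atTop]
    exact hS
  obtain ⟨s, hmod, hs⟩ := ((Nat.frequently_modEq hn i).and_eventually hev).exists
  exact ⟨s, hs, hmod⟩

theorem aperyW_mem_and_modEq (hS : Sᶜ.Finite) (hn : n ≠ 0) (i : ℕ) :
    aperyW S n i ∈ S ∧ aperyW S n i ≡ i [MOD n] :=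
  Nat.sInf_mem (exists_mem_modEq_of_finite_compl hS hn i)

end AperyW

section Multiplicity

variable {S : Set ℕ} {m x : ℕ}

theorem isLeast_nsMult (hx : x ∈ S) (hx0 : x ≠ 0) :
    IsLeast {y | y ∈ S ∧ y ≠ 0} (nsMult S) :=
  ⟨Nat.sInf_mem ⟨x, hx, hx0⟩, fun _ hy => Nat.sInf_le hy⟩

theorem nsMult_ne_zero_of_finite_compl (hS : Sᶜ.Finite) : nsMult S ≠ 0 := by
  have hinf : S.Infinite := compl_compl S ▸ hS.infinite_compl
  obtain ⟨y, hy, hy0⟩ := hinf.exists_gt 0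
  exact (isLeast_nsMult hy hy0.ne').1.2

theorem nsMult_mem_msg (hx : x ∈ S) (hx0 : x ≠ 0) : nsMult S ∈ msg S := by
  obtain ⟨⟨hmem, hne⟩, hmin⟩ := isLeast_nsMult hx hx0
  refine ⟨hmem, hne, fun a ha ha0 b _ hb0 hab => ?_⟩
  have hle : nsMult S ≤ a := hmin ⟨ha, ha0⟩
  omega

theorem nsMult_eq_of_isLeast_msg (h : IsLeast (msg S) m) : nsMult S = m := by
  obtain ⟨hm, hm0, -⟩ := h.1
  exact le_antisymm ((isLeast_nsMult hm hm0).2 ⟨hm, hm0⟩) (h.2 (nsMult_mem_msg hm hm0))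

end Multiplicity

section MinimalGenerators

variable {M : AddSubmonoid ℕ} {m x s : ℕ}

theorem le_of_modEq_of_mem_msg (hx : x ∈ msg M) (hm : m ∈ M) (hs : s ∈ M) (hs0 : s ≠ 0)
    (h : s ≡ x [MOD m]) : x ≤ s := by
  by_contra! hlt
  obtain ⟨k, hk⟩ : m ∣ x - s := (Nat.modEq_iff_dvd' hlt.le).1 h
  have hmk : m * k ∈ M := by simpa only [smul_eq_mul, mul_comm] using nsmul_mem hm k
  exact hx.2.2 s hs hs0 (m * k) hmk (by omega) (by omega)

theorem not_dvd_of_mem_msg (hx : x ∈ msg M) (hm : m ∈ M) (hne : x ≠ m) : ¬ m ∣ x := by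
  intro hdvd
  have hle : x ≤ m := le_of_modEq_of_mem_msg hx hm hm (ne_zero_of_dvd_ne_zero hx.2.1 hdvd)
    (((Nat.modEq_zero_iff_dvd).2 dvd_rfl).trans ((Nat.modEq_zero_iff_dvd).2 hdvd).symm)
  exact hne (hle.antisymm (Nat.le_of_dvd (Nat.pos_of_ne_zero hx.2.1) hdvd))

theorem aperyW_eq_self_of_mem_msg (hx : x ∈ msg M) (hm : m ∈ M) (hne : x ≠ m) :
    aperyW M m x = x := by
  refine le_antisymm (aperyW_le hx.1 rfl) (le_csInf ⟨x, hx.1, rfl⟩ ?_)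
  rintro s ⟨hs, hmod⟩
  refine le_of_modEq_of_mem_msg hx hm hs ?_ hmod
  rintro rfl
  exact not_dvd_of_mem_msg hx hm hne (Nat.dvd_of_mod_eq_zero (by simpa using hmod.symm))

end MinimalGenerators

theorem IsNumSgp.exists_addSubmonoid_coe_eq {S : Set ℕ} (hS : IsNumSgp S) :
    ∃ M : AddSubmonoid ℕ, (M : Set ℕ) = S :=
  ⟨{ carrier := S, zero_mem' := hS.1, add_mem' := fun ha hb => hS.2.1 _ ha _ hb }, rfl⟩

namespace IsMANS

variable {S : Set ℕ} {M : AddSubmonoid ℕ} {a b i x : ℕ}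

theorem aperyW_lt_aperyW_succ (hS : IsMANS S) (hdvd : ¬ nsMult S ∣ i + 1) :
    aperyW S (nsMult S) i < aperyW S (nsMult S) (i + 1) := by
  obtain ⟨⟨h0, -, hfin⟩, hmono⟩ := hS
  have hm0 : nsMult S ≠ 0 := nsMult_ne_zero_of_finite_compl hfin
  have hlt : i % nsMult S + 1 < nsMult S :=
    succ_mod_of_not_dvd hdvd ▸ Nat.mod_lt _ (Nat.pos_of_ne_zero hm0)
  rw [← aperyW_mod S _ i, ← aperyW_mod S _ (i + 1), succ_mod_of_not_dvd hdvd]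
  rcases Nat.eq_zero_or_pos (i % nsMult S) with hi | hi
  · rw [hi, aperyW_zero h0, Nat.pos_iff_ne_zero]
    intro hw
    have hmod := (aperyW_mem_and_modEq hfin hm0 (0 + 1)).2
    rw [hw, zero_add] at hmod
    have hone : nsMult S = 1 := Nat.dvd_one.1 ((Nat.modEq_zero_iff_dvd).1 hmod.symm)
    omega
  · exact hmono _ hi hlt

theorem exists_mem_lt_succ_modEq (hS : IsMANS S) (ha : a ∈ S) (hdvd : ¬ nsMult S ∣ a) :
    ∃ c ∈ S, c < a ∧ c + 1 ≡ a [MOD nsMult S] := by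
  obtain ⟨j, rfl⟩ : ∃ j, a = j + 1 :=
    Nat.exists_eq_succ_of_ne_zero fun h => hdvd (h ▸ dvd_zero _)
  have hfin := hS.1.2.2
  obtain ⟨hc, hcj⟩ := aperyW_mem_and_modEq hfin (nsMult_ne_zero_of_finite_compl hfin) j
  exact ⟨_, hc, (hS.aperyW_lt_aperyW_succ hdvd).trans_le (aperyW_le ha rfl), hcj.add_right 1⟩

theorem succ_ne_add_of_mem_msg_of_not_dvd (hM : IsMANS (M : Set ℕ)) (hx : x ∈ msg M)
    (ha : a ∈ M) (hb : b ∈ M) (hb0 : b ≠ 0) (hdvd : ¬ nsMult M ∣ a) : x + 1 ≠ a + b := by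
  intro hab
  obtain ⟨⟨hm, -⟩, hmin⟩ := isLeast_nsMult hx.1 hx.2.1
  obtain ⟨c, hc, hca, hcmod⟩ := hM.exists_mem_lt_succ_modEq ha hdvd
  have hcb : c + b ≡ x [MOD nsMult M] := by
    refine Nat.ModEq.add_right_cancel' 1 ?_
    simpa only [hab, add_right_comm] using hcmod.add_right b
  have hle : x ≤ c + b := le_of_modEq_of_mem_msg hx hm (add_mem hc hb) (by omega) hcb
  have heq : x = c + b := by omega
  have hc0 : c ≠ 0 := by
    rintro rfl
    have ha1 : a = 1 := by omega
    have hm1 : nsMult (M : Set ℕ) ≤ 1 := hmin ⟨ha1 ▸ ha, one_ne_zero⟩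
    have hm0 : nsMult (M : Set ℕ) ≠ 0 := nsMult_ne_zero_of_finite_compl hM.1.2.2
    exact hdvd (by rw [ha1, Nat.dvd_one]; omega)
  exact hx.2.2 c hc hc0 b hb hb0 heq

theorem succ_mem_msg (hM : IsMANS (M : Set ℕ)) (hx : x ∈ msg M)
    (hdvd : ¬ nsMult M ∣ x + 1) (hmem : x + 1 ∈ M) : x + 1 ∈ msg M := by
  refine ⟨hmem, x.succ_ne_zero, fun a ha ha0 b hb hb0 => ?_⟩
  by_cases hda : nsMult M ∣ a
  · intro hab
    have hdb : ¬ nsMult M ∣ b := fun hdb => hdvd (hab ▸ dvd_add hda hdb)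
    exact hM.succ_ne_add_of_mem_msg_of_not_dvd hx hb ha ha0 hdb (by rw [hab, add_comm])
  · exact hM.succ_ne_add_of_mem_msg_of_not_dvd hx ha hb hb0 hda

theorem succ_lt_aperyW_succ (hM : IsMANS (M : Set ℕ)) (hx : IsGreatest (msg M) x)
    (hne : x ≠ nsMult M) (hdvd : ¬ nsMult M ∣ x + 1) :
    x + 1 < aperyW M (nsMult M) (x + 1) := by
  obtain ⟨hm, hm0⟩ := (isLeast_nsMult hx.1.1 hx.1.2.1).1
  have hlt : x < aperyW M (nsMult M) (x + 1) := by
    simpa only [aperyW_eq_self_of_mem_msg hx.1 hm hne] using hM.aperyW_lt_aperyW_succ hdvd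
  have hnot : x + 1 ∉ M := fun h => x.not_succ_le_self (hx.2 (hM.succ_mem_msg hx.1 hdvd h))
  have hw : aperyW M (nsMult M) (x + 1) ∈ M := (aperyW_mem_and_modEq hM.1.2.2 hm0 (x + 1)).1
  exact lt_of_le_of_ne hlt fun heq => hnot (heq ▸ hw)

end IsMANS

theorem stmt19 (S : Set ℕ) (e : ℕ) (he : 2 ≤ e) (n : Fin e → ℕ)
    (hmono : StrictMono n) (hmsg : msg S = Set.range n)
    (h3 : 3 ≤ n ⟨0, by omega⟩) (hM : IsMANS S)
    (hlt : n ⟨e - 1, by omega⟩ % n ⟨0, by omega⟩ < n ⟨0, by omega⟩ - 1) :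
    n ⟨e - 1, by omega⟩ < n ⟨e - 1, by omega⟩ + 1 ∧
    n ⟨e - 1, by omega⟩ % n ⟨0, by omega⟩ < (n ⟨e - 1, by omega⟩ + 1) % n ⟨0, by omega⟩ ∧
    aperyW S (n ⟨0, by omega⟩) ((n ⟨e - 1, by omega⟩ + 1) % n ⟨0, by omega⟩ - 1)
      < n ⟨e - 1, by omega⟩ + 1 ∧
    n ⟨e - 1, by omega⟩ + 1 < aperyW S (n ⟨0, by omega⟩) ((n ⟨e - 1, by omega⟩ + 1) % n ⟨0, by omega⟩) := by
  obtain ⟨M, rfl⟩ := hM.1.exists_addSubmonoid_coe_eq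
  have hleast : IsLeast (msg M) (n ⟨0, by omega⟩) :=
    hmsg ▸ ⟨⟨_, rfl⟩, Set.forall_mem_range.2 fun j => hmono.monotone (Nat.zero_le j)⟩
  have hgreatest : IsGreatest (msg M) (n ⟨e - 1, by omega⟩) :=
    hmsg ▸ ⟨⟨_, rfl⟩, Set.forall_mem_range.2 fun j => hmono.monotone (Nat.le_sub_one_of_lt j.2)⟩
  have hne : n ⟨e - 1, by omega⟩ ≠ n ⟨0, by omega⟩ := (hmono (Fin.mk_lt_mk.2 (by omega))).ne'
  have hdvd : ¬ n ⟨0, by omega⟩ ∣ n ⟨e - 1, by omega⟩ + 1 :=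
    mt (Nat.mod_eq_sub_iff one_pos (by omega)).2 hlt.ne
  have hmod := succ_mod_of_not_dvd hdvd
  have hself := aperyW_eq_self_of_mem_msg hgreatest.1 hleast.1.1 hne
  have hmult := nsMult_eq_of_isLeast_msg hleast
  refine ⟨Nat.lt_succ_self _, by omega, ?_, ?_⟩
  · simp only [hmod, Nat.add_sub_cancel, aperyW_mod, hself, Nat.lt_succ_self]
  · rw [aperyW_mod, ← hmult]
    exact hM.succ_lt_aperyW_succ hgreatest (hmult ▸ hne) (hmult ▸ hdvd)
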